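/- arXiv:2312.13159 — 2 statements merged into one kernel-verified Lean document; each statement's English description precedes it below -/
import Mathlib

section
/- For n ≥ 1, the number of modern Tamari intervals of size n equals 3·2^{n-1}/((n+1)(n+2)) · C(2n, n). -/
/-- Binary trees: a leaf or a binary node with two subtrees. -/
inductive BT : Type
  | leaf : BT
  | node : BT → BT → BT

namespace BT

/-- Number of binary (internal) nodes. -/
def size : BT → ℕ
  | leaf => 0
  | node l r => l.size + r.size + 1

/-- One right rotation somewhere in the tree: ((A,B),C) ↦ (A,(B,C)). -/
inductive Rot : BT → BT → Prop
  | rotate (A B C : BT) : Rot (node (node A B) C) (node A (node B C))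
  | left {l l' : BT} (r : BT) : Rot l l' → Rot (node l r) (node l' r)
  | right (l : BT) {r r' : BT} : Rot r r' → Rot (node l r) (node l r')

/-- Tamari order: reflexive-transitive closure of right rotation. -/
def tle (T T' : BT) : Prop := Relation.ReflTransGen Rot T T'

/-- Bracket-vector: sizes of right subtrees of nodes, in infix order. -/
def bracket : BT → List ℕ
  | leaf => []
  | node l r => bracket l ++ r.size :: bracket r

/-- Dual bracket-vector: sizes of left subtrees of nodes, in infix order. -/
def dualBracket : BT → List ℕ
  | leaf => []
  | node l r => dualBracket l ++ l.size :: dualBracket r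

/-- Canopy word: for each leaf (left to right), 1 if it is a left child, 0 if a right child;
the argument `b` is the value assigned to the tree if it is itself a leaf. -/
def canopyAux (b : ℕ) : BT → List ℕ
  | leaf => [b]
  | node l r => canopyAux 1 l ++ canopyAux 0 r

/-- Canopy-vector of a binary tree. -/
def canopy (T : BT) : List ℕ := canopyAux 1 T

/-- Left-right mirror. -/
def mir : BT → BT
  | leaf => leaf
  | node l r => node (mir r) (mir l)

/-- Tamari interval of size n. -/
def interval (p : BT × BT) (n : ℕ) : Prop :=
  p.1.size = n ∧ p.2.size = n ∧ tle p.1 p.2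

/-- Tamari interval (of unspecified size). -/
def isInt (p : BT × BT) : Prop := p.1.size = p.2.size ∧ tle p.1 p.2

/-- The rise operation (T,T') ↦ ((T,ε),(ε,T')). -/
def riseF (p : BT × BT) : BT × BT := (node p.1 leaf, node leaf p.2)

/-- An interval is modern when its rise is again an interval. -/
def modern (p : BT × BT) : Prop := tle (node p.1 leaf) (node leaf p.2)

/-- Infinitely modern: every iterated rise is an interval. -/
def infModern (p : BT × BT) : Prop :=
  ∀ k : ℕ, tle ((riseF^[k] p).1) ((riseF^[k] p).2)

/-- Synchronized: equal canopies. -/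
def synced (p : BT × BT) : Prop := canopy p.1 = canopy p.2

/-- Self-dual: equal to its dual (mir T', mir T). -/
def selfDual (p : BT × BT) : Prop := mir p.2 = p.1 ∧ mir p.1 = p.2

/-- Number of positions where the two canopies agree. -/
def agreeCount (p : BT × BT) : ℕ :=
  ((List.range (p.1.size + 1)).filter
    (fun i => (canopy p.1).getD i 0 == (canopy p.2).getD i 0)).length

/-- Number of canopy positions of joint type (a on top, b on bottom), for an interval (T,T')
with T' the upper tree. -/
def typeCount (a b : ℕ) (p : BT × BT) : ℕ :=
  ((List.range (p.1.size + 1)).filter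
    (fun i => ((canopy p.2).getD i 0 == a) && ((canopy p.1).getD i 0 == b))).length

end BT

namespace BT

/-- `Dec T A B`: some node on the left branch of `T` has left subtree `A`, and deleting that node
together with `A` leaves `B`. -/
inductive Dec : BT → BT → BT → Prop
  | base (A B : BT) : Dec (node A B) A B
  | step {T A B : BT} (D : BT) : Dec T A B → Dec (node T D) A (node B D)

lemma Dec.size_eq {T A B : BT} (h : Dec T A B) : T.size = A.size + B.size + 1 := by
  induction h with
  | base A B => simp [size]
  | step D h ih => simp only [size]; omega

lemma Dec.unique {T A B A' B' : BT} (h : Dec T A B) (h' : Dec T A' B')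
    (hs : A.size = A'.size) : A = A' ∧ B = B' := by
  induction h generalizing A' B' with
  | base A B =>
    cases h' with
    | base => exact ⟨rfl, rfl⟩
    | step D h1 => have := h1.size_eq; omega
  | step D h ih =>
    cases h' with
    | base => have := h.size_eq; omega
    | step D h1 =>
      obtain ⟨rfl, rfl⟩ := ih h1 hs
      exact ⟨rfl, rfl⟩

lemma size_eq_zero {T : BT} (h : T.size = 0) : T = leaf := by
  cases T with
  | leaf => rfl
  | node l r => simp [size] at h

lemma Rot.size_eq {T S : BT} (h : Rot T S) : T.size = S.size := by
  induction h with
  | rotate A B C => simp only [size]; omega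
  | left r h ih => simp only [size]; omega
  | right l h ih => simp only [size]; omega

lemma tle_size {T S : BT} (h : tle T S) : T.size = S.size := by
  unfold tle at h
  induction h with
  | refl => rfl
  | tail _ h ih => rw [ih, h.size_eq]

lemma tle_refl (T : BT) : tle T T := Relation.ReflTransGen.refl

lemma tle_trans {T S U : BT} (h : tle T S) (h' : tle S U) : tle T U :=
  Relation.ReflTransGen.trans h h'

lemma tle_left {T S : BT} (D : BT) (h : tle T S) : tle (node T D) (node S D) :=
  Relation.ReflTransGen.lift (fun X => node X D) (fun _ _ h => Rot.left D h) _ _ h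

lemma tle_right {T S : BT} (D : BT) (h : tle T S) : tle (node D T) (node D S) :=
  Relation.ReflTransGen.lift (fun X => node D X) (fun _ _ h => Rot.right D h) _ _ h

lemma tle_rot {T S : BT} (h : Rot T S) : tle T S := Relation.ReflTransGen.single h

lemma Dec.tle_node {T A B : BT} (h : Dec T A B) : tle T (node A B) := by
  induction h with
  | base A B => exact tle_refl _
  | step D h ih => exact tle_trans (tle_left D ih) (tle_rot (Rot.rotate _ _ _))

lemma Dec.rot {S A B : BT} (h : Dec S A B) : ∀ {T : BT}, Rot T S →
    ∃ A' B', Dec T A' B' ∧ tle A' A ∧ tle B' B := by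
  induction h with
  | base A B =>
    intro T hr
    cases hr with
    | rotate _ B1 C => exact ⟨_, _, Dec.step C (Dec.base A B1), tle_refl _, tle_refl _⟩
    | left _ h => exact ⟨_, _, Dec.base _ _, tle_rot h, tle_refl _⟩
    | right _ h => exact ⟨_, _, Dec.base _ _, tle_refl _, tle_rot h⟩
  | step D h ih =>
    intro T hr
    cases hr with
    | rotate _ D1 D2 =>
      exact ⟨_, _, Dec.step D2 (Dec.step D1 h), tle_refl _, tle_rot (Rot.rotate _ _ _)⟩
    | left _ h1 =>
      obtain ⟨A', B', h2, h3, h4⟩ := ih h1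
      exact ⟨_, _, Dec.step D h2, h3, tle_left _ h4⟩
    | right _ h1 => exact ⟨_, _, Dec.step _ h, tle_refl _, tle_right _ (tle_rot h1)⟩

lemma tle_node_iff {T L R : BT} :
    tle T (node L R) ↔ ∃ A B, Dec T A B ∧ tle A L ∧ tle B R := by
  constructor
  · intro h
    unfold tle at h
    induction h using Relation.ReflTransGen.head_induction_on with
    | refl => exact ⟨_, _, Dec.base _ _, tle_refl _, tle_refl _⟩
    | head hr _ ih =>
      obtain ⟨A, B, h1, h2, h3⟩ := ih
      obtain ⟨A', B', h4, h5, h6⟩ := h1.rot hr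
      exact ⟨A', B', h4, tle_trans h5 h2, tle_trans h6 h3⟩
  · rintro ⟨A, B, h, hA, hB⟩
    exact tle_trans h.tle_node (tle_trans (tle_left _ hA) (tle_right _ hB))

lemma modern_iff {T S : BT} :
    modern (T, S) ↔ ∃ C, Dec (node T leaf) leaf C ∧ tle C S := by
  unfold modern
  rw [tle_node_iff]
  constructor
  · rintro ⟨A, B, h, hA, hB⟩
    have : A = leaf := size_eq_zero (by rw [tle_size hA]; rfl)
    subst this
    exact ⟨B, h, hB⟩
  · rintro ⟨C, h, hC⟩
    exact ⟨_, _, h, tle_refl _, hC⟩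

/-- Length of the left branch. -/
def lb : BT → ℕ
  | leaf => 0
  | node l _ => lb l + 1

/-- Replace the leftmost leaf of the second tree by `node A leaf`. -/
def full (A : BT) : BT → BT
  | leaf => node A leaf
  | node X D => node (full A X) D

/-- Insert a new leftmost node at depth `j` of the left branch. -/
def ins : ℕ → BT → BT
  | 0, T => node leaf T
  | _ + 1, leaf => node leaf leaf
  | j + 1, node X D => node (ins j X) D

lemma full_dec (A B : BT) : Dec (full A B) A B := by
  induction B with
  | leaf => exact Dec.base _ _
  | node X D ih _ => exact Dec.step _ ih

lemma lb_full (A B : BT) : lb (full A B) = lb A + lb B + 1 := by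
  induction B with
  | leaf => simp [full, lb]
  | node X D ih _ => simp only [full, lb, ih]; omega

lemma ins_dec (j : ℕ) (B : BT) (hj : j ≤ lb B) : Dec (ins j B) leaf B := by
  induction B generalizing j with
  | leaf => cases j with
    | zero => exact Dec.base _ _
    | succ j => simp [lb] at hj
  | node X D ih _ => cases j with
    | zero => exact Dec.base _ _
    | succ j => exact Dec.step _ (ih j (by simpa [lb] using hj))

lemma lb_ins (j : ℕ) (B : BT) (hj : j ≤ lb B) : lb (ins j B) = j + 1 := by
  induction B generalizing j with
  | leaf => cases j with
    | zero => rfl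
    | succ j => simp [lb] at hj
  | node X D ih _ => cases j with
    | zero => rfl
    | succ j => simp only [ins, lb]; rw [ih j (by simpa [lb] using hj)]

lemma Dec.exists_ins {T A B : BT} (h : Dec T A B) (hA : A = leaf) :
    ∃ j ≤ lb B, T = ins j B := by
  induction h with
  | base A B => subst hA; exact ⟨0, Nat.zero_le _, rfl⟩
  | step D h ih =>
    obtain ⟨j, hj, rfl⟩ := ih hA
    exact ⟨j + 1, by simpa [lb] using hj, rfl⟩

lemma not_dec_leaf {A B : BT} : ¬ Dec leaf A B := by
  intro h; cases h

/-- Inversion for decompositions whose first part is a leaf. -/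
lemma dec_node_leaf {X D C : BT} (h : Dec (node X D) leaf C) :
    (X = leaf ∧ C = D) ∨ ∃ S, Dec X leaf S ∧ C = node S D := by
  cases h with
  | base => exact Or.inl ⟨rfl, rfl⟩
  | step _ h => exact Or.inr ⟨_, h, rfl⟩

lemma key {T A B : BT} (h : Dec T A B) (hA : A ≠ leaf) : ∀ {S A' C : BT}, Dec T leaf S →
    Dec (node S leaf) A' C → A'.size = A.size →
    T = full A B ∧ Dec (node A leaf) leaf A' ∧ Dec (node B leaf) leaf C := by
  induction h with
  | base A B =>
    intro S A' C hS hC hs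
    rcases dec_node_leaf hS with ⟨h, _⟩ | ⟨S1, h1, rfl⟩
    · exact absurd h hA
    have e1 := h1.size_eq
    simp only [size] at e1
    cases hC with
    | base =>
      simp only [size] at hs
      have : B = leaf := size_eq_zero (by omega)
      subst this
      exact ⟨rfl, Dec.step _ h1, Dec.base _ _⟩
    | step _ h2 =>
      cases h2 with
      | base => omega
      | step _ h3 => have := h3.size_eq; omega
  | @step X A Y D h ih =>
    intro S A' C hS hC hs
    have e0 := h.size_eq
    rcases dec_node_leaf hS with ⟨h1, _⟩ | ⟨S', h1, rfl⟩
    · subst h1; exact absurd h not_dec_leaf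
    have e1 := h1.size_eq
    simp only [size] at e1
    cases hC with
    | base => simp only [size] at hs; omega
    | step _ h2 =>
      cases h2 with
      | base =>
        obtain ⟨i1, i2, i3⟩ := ih hA h1 (Dec.base _ _) hs
        have : Y = leaf := size_eq_zero (by omega)
        subst this
        exact ⟨by rw [i1]; rfl, i2, Dec.step _ (Dec.base _ _)⟩
      | step _ h3 =>
        obtain ⟨i1, i2, i3⟩ := ih hA h1 (Dec.step _ h3) hs
        refine ⟨by simp only [full]; rw [← i1], i2, ?_⟩
        rcases dec_node_leaf i3 with ⟨_, h4⟩ | ⟨S1, h4, h5⟩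
        · exact absurd h4 (by simp)
        · cases h5; exact Dec.step _ (Dec.step _ h4)

lemma key_conv {A A' : BT} (hA : A ≠ leaf) (h1 : Dec (node A leaf) leaf A') :
    ∀ {B C : BT}, Dec (node B leaf) leaf C →
    ∃ S, Dec (full A B) leaf S ∧ Dec (node S leaf) A' C := by
  rcases dec_node_leaf h1 with ⟨h, _⟩ | ⟨S1, h2, rfl⟩
  · exact absurd h hA
  intro B
  induction B with
  | leaf =>
    intro C hC
    rcases dec_node_leaf hC with ⟨_, rfl⟩ | ⟨S, h, _⟩
    · exact ⟨_, Dec.step _ h2, Dec.base _ _⟩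
    · exact absurd h not_dec_leaf
  | node Y D ih _ =>
    intro C hC
    rcases dec_node_leaf hC with ⟨h, _⟩ | ⟨S, h, rfl⟩
    · exact absurd h (by simp)
    rcases dec_node_leaf h with ⟨rfl, rfl⟩ | ⟨C', h', rfl⟩
    · exact ⟨_, Dec.step _ (Dec.step _ h2), Dec.step _ (Dec.base _ _)⟩
    · obtain ⟨S', i1, i2⟩ := ih (Dec.step _ h')
      refine ⟨_, Dec.step _ i1, ?_⟩
      cases i2 with
      | step _ i3 => exact Dec.step _ (Dec.step _ i3)

/-- Modern intervals of size `n`. -/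
def MS (n : ℕ) : Set (BT × BT) := {p | interval p n ∧ modern p}

lemma mem_MS {n : ℕ} {p : BT × BT} :
    p ∈ MS n ↔ p.1.size = n ∧ p.2.size = n ∧ tle p.1 p.2 ∧ modern p := by
  simp only [MS, interval, Set.mem_ofPred_eq]; tauto

lemma MS_zero : MS 0 = {(leaf, leaf)} := by
  ext ⟨T, S⟩
  rw [mem_MS]
  simp only [Set.mem_singleton_iff, Prod.mk.injEq]
  constructor
  · rintro ⟨h1, h2, -, -⟩
    exact ⟨size_eq_zero h1, size_eq_zero h2⟩
  · rintro ⟨rfl, rfl⟩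
    exact ⟨rfl, rfl, tle_refl _, tle_refl _⟩

def Phi (x : (BT × BT) × (BT × BT)) : BT × BT := (full x.1.1 x.2.1, node x.1.2 x.2.2)

def Psi (x : (_ : BT × BT) × ℕ) : BT × BT := (ins x.2 x.1.1, node leaf x.1.2)

lemma MS_succ {n : ℕ} {p : BT × BT} : p ∈ MS (n + 1) ↔
    (∃ i j, i + j = n ∧ i ≠ 0 ∧ ∃ q ∈ MS i, ∃ q' ∈ MS j, Phi (q, q') = p) ∨
    (∃ q ∈ MS n, ∃ j ≤ lb q.1, Psi ⟨q, j⟩ = p) := by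
  constructor
  · obtain ⟨T, T'⟩ := p
    rw [mem_MS]
    rintro ⟨hs1, hs2, hle, hm⟩
    cases T' with
    | leaf => simp [size] at hs2
    | node L R =>
    simp only at *
    obtain ⟨A, B, hd, hA, hB⟩ := tle_node_iff.1 hle
    obtain ⟨C, hC, hCle⟩ := modern_iff.1 hm
    have eA := tle_size hA
    have eB := tle_size hB
    have eT := hd.size_eq
    simp only [size] at hs2
    rcases dec_node_leaf hC with ⟨h, _⟩ | ⟨S, hS, rfl⟩
    · subst h; simp [size] at hs1
    by_cases hL : L = leaf
    · subst hL
      right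
      have : A = leaf := size_eq_zero (by rw [eA]; rfl)
      subst this
      obtain ⟨-, rfl⟩ := hd.unique hS rfl
      obtain ⟨j, hj, rfl⟩ := hd.exists_ins rfl
      simp only [size] at *
      exact ⟨(B, R), mem_MS.2 ⟨by simp only; omega, by simp only; omega, hB, hCle⟩, j, hj, rfl⟩
    · left
      have hL0 : L.size ≠ 0 := fun h => hL (size_eq_zero h)
      have hA0 : A ≠ leaf := by rintro rfl; simp [size] at eA; omega
      obtain ⟨A', C', hd', hA', hC'⟩ := tle_node_iff.1 hCle
      obtain ⟨rfl, k1, k2⟩ := key hd hA0 hS hd' (by rw [tle_size hA', eA])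
      exact ⟨L.size, R.size, by omega, hL0, (A, L), mem_MS.2 ⟨eA, rfl, hA,
        modern_iff.2 ⟨_, k1, hA'⟩⟩, (B, R), mem_MS.2 ⟨eB, rfl, hB, modern_iff.2 ⟨_, k2, hC'⟩⟩, rfl⟩
  · rintro (⟨i, j, hij, hi, ⟨A, L⟩, hq, ⟨B, R⟩, hq', rfl⟩ | ⟨⟨B, R⟩, hq, j, hj, rfl⟩)
    · rw [mem_MS] at hq hq'
      obtain ⟨a1, a2, a3, a4⟩ := hq
      obtain ⟨b1, b2, b3, b4⟩ := hq'
      simp only at *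
      have hA0 : A ≠ leaf := by rintro rfl; simp [size] at a1; omega
      obtain ⟨A', k1, hA'⟩ := modern_iff.1 a4
      obtain ⟨C', k2, hC'⟩ := modern_iff.1 b4
      obtain ⟨S, s1, s2⟩ := key_conv hA0 k1 k2
      rw [mem_MS]
      refine ⟨?_, ?_, tle_node_iff.2 ⟨_, _, full_dec A B, a3, b3⟩, ?_⟩
      · have := (full_dec A B).size_eq
        simp only [Phi]; omega
      · simp only [Phi, size]; omega
      · exact modern_iff.2 ⟨_, Dec.step _ s1, tle_node_iff.2 ⟨_, _, s2, hA', hC'⟩⟩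
    · rw [mem_MS] at hq
      obtain ⟨b1, b2, b3, b4⟩ := hq
      simp only at *
      have hd := ins_dec j B hj
      rw [mem_MS]
      refine ⟨?_, ?_, tle_node_iff.2 ⟨_, _, hd, tle_refl _, b3⟩, ?_⟩
      · have := hd.size_eq
        simp only [Psi, size] at *; omega
      · simp only [Psi, size]; omega
      · exact modern_iff.2 ⟨_, Dec.step _ hd, b4⟩

lemma finite_size (n : ℕ) : {T : BT | T.size ≤ n}.Finite := by
  induction n with
  | zero =>
    refine (Set.finite_singleton leaf).subset ?_
    intro T hT
    exact size_eq_zero (Nat.le_zero.1 hT)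
  | succ n ih =>
    refine ((Set.finite_singleton leaf).union (Set.Finite.image2 node ih ih)).subset ?_
    intro T hT
    cases T with
    | leaf => left; rfl
    | node l r =>
      right
      simp only [size, Set.mem_ofPred_eq] at hT
      exact ⟨l, by simp only [Set.mem_ofPred_eq]; omega, r,
        by simp only [Set.mem_ofPred_eq]; omega, rfl⟩

lemma MS_finite (n : ℕ) : (MS n).Finite := by
  refine ((finite_size n).prod (finite_size n)).subset ?_
  intro p hp
  rw [mem_MS] at hp
  exact ⟨hp.1.le, hp.2.1.le⟩

/-- Modern intervals of size `n`, as a finset. -/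
noncomputable def MF (n : ℕ) : Finset (BT × BT) := (MS_finite n).toFinset

lemma mem_MF {n : ℕ} {p : BT × BT} : p ∈ MF n ↔ p ∈ MS n := by simp [MF]

open Polynomial in
/-- Size-`n` generating polynomial, recording the left branch of the lower tree. -/
noncomputable def P (n : ℕ) : ℚ[X] := ∑ p ∈ MF n, X ^ lb p.1

lemma P_zero : P 0 = 1 := by
  have : MF 0 = {(leaf, leaf)} := by
    ext p; rw [mem_MF, MS_zero]; simp
  simp [P, this, lb]

lemma P_eval_one (n : ℕ) : (P n).eval 1 = ((MS n).ncard : ℚ) := by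
  simp [P, Polynomial.eval_finsetSum, MF, Set.ncard_eq_toFinset_card _ (MS_finite n)]

open Classical in
lemma MF_succ (n : ℕ) : MF (n + 1) =
    ((Finset.HasAntidiagonal.antidiagonal n).filter (fun x => x.1 ≠ 0)).biUnion
      (fun x => (MF x.1 ×ˢ MF x.2).image Phi) ∪
    ((MF n).sigma (fun q => Finset.range (lb q.1 + 1))).image Psi := by
  ext p
  rw [mem_MF, MS_succ]
  simp only [Finset.mem_union, Finset.mem_biUnion, Finset.mem_filter, Finset.HasAntidiagonal.mem_antidiagonal,
    Finset.mem_image, Finset.mem_product, mem_MF, Finset.mem_sigma, Finset.mem_range,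
    Nat.lt_succ_iff]
  constructor
  · rintro (⟨i, j, h1, h2, q, hq, q', hq', h⟩ | ⟨q, hq, j, hj, h⟩)
    · exact Or.inl ⟨(i, j), ⟨h1, h2⟩, (q, q'), ⟨hq, hq'⟩, h⟩
    · exact Or.inr ⟨⟨q, j⟩, ⟨hq, hj⟩, h⟩
  · rintro (⟨⟨i, j⟩, ⟨h1, h2⟩, ⟨q, q'⟩, ⟨hq, hq'⟩, h⟩ | ⟨⟨q, j⟩, ⟨hq, hj⟩, h⟩)
    · exact Or.inl ⟨i, j, h1, h2, q, hq, q', hq', h⟩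
    · exact Or.inr ⟨q, hq, j, hj, h⟩

lemma Phi_inj {q q' r r' : BT × BT} (h1 : q.1.size = q.2.size) (h2 : r.1.size = r.2.size)
    (h : Phi (q, q') = Phi (r, r')) : q = r ∧ q' = r' := by
  obtain ⟨A, L⟩ := q
  obtain ⟨B, R⟩ := q'
  obtain ⟨A', L'⟩ := r
  obtain ⟨B', R'⟩ := r'
  simp only [Phi, Prod.mk.injEq, node.injEq] at *
  obtain ⟨h3, rfl, rfl⟩ := h
  have hd := full_dec A B
  rw [h3] at hd
  obtain ⟨rfl, rfl⟩ := hd.unique (full_dec A' B') (by omega)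
  simp

open Polynomial in
lemma P_succ' (n : ℕ) : P (n + 1) =
    ∑ x ∈ (Finset.HasAntidiagonal.antidiagonal n).filter (fun x => x.1 ≠ 0), X * P x.1 * P x.2 +
    ∑ p ∈ MF n, ∑ j ∈ Finset.range (lb p.1 + 1), X ^ (j + 1) := by
  classical
  unfold P
  rw [MF_succ, Finset.sum_union, Finset.sum_biUnion, Finset.sum_image, Finset.sum_sigma]
  · congr 1
    · refine Finset.sum_congr rfl ?_
      intro x hx
      rw [Finset.sum_image, Finset.sum_product, mul_assoc, Finset.sum_mul_sum, Finset.mul_sum]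
      · refine Finset.sum_congr rfl fun q hq => ?_
        rw [Finset.mul_sum]
        refine Finset.sum_congr rfl fun q' hq' => ?_
        simp only [Phi, lb_full]
        ring
      · rintro ⟨q, q'⟩ hq ⟨r, r'⟩ hr h
        simp only [Finset.coe_product, Set.mem_prod, Finset.mem_coe, mem_MF, mem_MS] at hq hr
        obtain ⟨rfl, rfl⟩ := Phi_inj (hq.1.1.trans hq.1.2.1.symm) (hr.1.1.trans hr.1.2.1.symm) h
        rfl
    · refine Finset.sum_congr rfl fun q hq => Finset.sum_congr rfl fun j hj => ?_
      simp only [Psi]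
      rw [lb_ins _ _ (by simpa [Nat.lt_succ_iff] using hj)]
  · rintro ⟨q, j⟩ hq ⟨r, k⟩ hr h
    simp only [Finset.coe_sigma, Set.mem_sigma_iff, Finset.mem_coe, Finset.mem_range,
      Nat.lt_succ_iff] at hq hr
    obtain ⟨B, R⟩ := q
    obtain ⟨B', R'⟩ := r
    simp only [Psi, Prod.mk.injEq, node.injEq, true_and] at h hq hr
    obtain ⟨h, rfl⟩ := h
    have e := congrArg lb h
    rw [lb_ins _ _ hq.2, lb_ins _ _ hr.2] at e
    have hd := ins_dec j B hq.2
    rw [h] at hd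
    obtain ⟨-, rfl⟩ := hd.unique (ins_dec k B' hr.2) rfl
    obtain rfl : j = k := by omega
    rfl
  · intro x hx y hy hxy
    rw [Function.onFun, Finset.disjoint_left]
    intro p hp hp'
    simp only [Finset.mem_image, Finset.mem_product, mem_MF, mem_MS] at hp hp'
    obtain ⟨⟨q, q'⟩, hq, rfl⟩ := hp
    obtain ⟨⟨r, r'⟩, hr, h⟩ := hp'
    obtain ⟨rfl, rfl⟩ := Phi_inj (hr.1.1.trans hr.1.2.1.symm) (hq.1.1.trans hq.1.2.1.symm) h
    apply hxy
    ext
    · rw [← hq.1.1, ← hr.1.1]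
    · rw [← hq.2.1, ← hr.2.1]
  · rw [Finset.disjoint_left]
    intro p hp hp'
    simp only [Finset.mem_biUnion, Finset.mem_filter, Finset.mem_image, Finset.mem_product,
      mem_MF, mem_MS] at hp hp'
    obtain ⟨x, ⟨_, hx⟩, ⟨q, q'⟩, hq, rfl⟩ := hp
    obtain ⟨⟨r, k⟩, -, h⟩ := hp'
    simp only [Phi, Psi, Prod.mk.injEq, node.injEq] at h
    apply hx
    rw [← hq.1.2.1, ← h.2.1]
    rfl

open Polynomial in
lemma P_succ (n : ℕ) : (X - 1) * P (n + 1) =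
    X * (X - 1) * ∑ x ∈ Finset.HasAntidiagonal.antidiagonal n, P x.1 * P x.2 +
    X * (P n - C ((P n).eval 1)) := by
  have h1 : ∑ x ∈ Finset.HasAntidiagonal.antidiagonal n, P x.1 * P x.2 =
      ∑ x ∈ (Finset.HasAntidiagonal.antidiagonal n).filter (fun x => x.1 ≠ 0), P x.1 * P x.2 + P n := by
    rw [← Finset.sum_filter_add_sum_filter_not (Finset.HasAntidiagonal.antidiagonal n) (fun x => x.1 ≠ 0)]
    congr 1
    have : (Finset.HasAntidiagonal.antidiagonal n).filter (fun x => ¬ x.1 ≠ 0) = {(0, n)} := by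
      ext ⟨a, b⟩
      simp only [Finset.mem_filter, Finset.HasAntidiagonal.mem_antidiagonal, Finset.mem_singleton, Prod.mk.injEq]
      omega
    rw [this]
    simp [P_zero]
  have h2 : (X - 1) * ∑ p ∈ MF n, ∑ j ∈ Finset.range (lb p.1 + 1), (X : ℚ[X]) ^ (j + 1) =
      X * (X * P n - C ((P n).eval 1)) := by
    have : C ((P n).eval 1) = ∑ p ∈ MF n, (1 : ℚ[X]) := by
      simp [P, Polynomial.eval_finsetSum]
    rw [this]
    unfold P
    rw [Finset.mul_sum, Finset.mul_sum, ← Finset.sum_sub_distrib, Finset.mul_sum]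
    refine Finset.sum_congr rfl fun p _ => ?_
    have := mul_geom_sum (X : ℚ[X]) (lb p.1 + 1)
    simp only [pow_succ' X, ← Finset.mul_sum] at this ⊢
    linear_combination X * this
  rw [P_succ', h1, mul_add, h2]
  simp only [mul_assoc, ← Finset.mul_sum]
  ring

end BT
namespace BT

open Polynomial in
lemma uniq (N : ℕ → ℚ[X]) (m : ℕ → ℚ) (h0 : N 0 = 1)
    (h : ∀ n, (X - 1) * N (n + 1) =
      X * (X - 1) * ∑ x ∈ Finset.HasAntidiagonal.antidiagonal n, N x.1 * N x.2 + X * (N n - C (m n))) (n : ℕ) :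
    m n = (P n).eval 1 := by
  have e : ∀ n, m n = (N n).eval 1 := by
    intro n
    have := congrArg (eval 1) (h n)
    simp at this
    linarith
  have hN : ∀ n, N n = P n := by
    intro n
    induction n using Nat.strong_induction_on with
    | _ n ih =>
      cases n with
      | zero => rw [h0, P_zero]
      | succ n =>
        have hX : (X - 1 : ℚ[X]) ≠ 0 := by
          simpa using Polynomial.X_sub_C_ne_zero (1 : ℚ)
        apply mul_left_cancel₀ hX
        rw [h, P_succ, e n, ih n (by omega)]
        congr 2
        refine Finset.sum_congr rfl ?_
        rintro ⟨a, b⟩ hab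
        rw [Finset.HasAntidiagonal.mem_antidiagonal] at hab
        simp only at hab ⊢
        rw [ih a (by omega), ih b (by omega)]
  rw [e, hN]

lemma exists_cat {A : Type*} [CommRing A] (e : PowerSeries A)
    (he : PowerSeries.constantCoeff e = 0) : ∃ Y : PowerSeries A, Y = 1 + e * Y ^ 2 := by
  have hs : PowerSeries.HasSubst e := PowerSeries.HasSubst.of_constantCoeff_zero' he
  let c : PowerSeries A := PowerSeries.map (Nat.castRingHom A) PowerSeries.catalanSeries
  have hc : c ^ 2 * PowerSeries.X + 1 = c := by
    have := congrArg (PowerSeries.map (Nat.castRingHom A))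
      PowerSeries.catalanSeries_sq_mul_X_add_one
    simpa [c] using this
  refine ⟨PowerSeries.substAlgHom hs c, ?_⟩
  have := congrArg (PowerSeries.substAlgHom hs) hc
  rw [map_add, map_mul, map_pow, map_one, PowerSeries.substAlgHom_X] at this
  rw [← this]
  rw [this]
  linear_combination -this

lemma field_id {K : Type*} [Field K] [CharZero K] (u t s g M M1 : K) (hs : s ≠ 0)
    (hg : 1 + g ≠ 0) (hsg : s + g ≠ 0) (hs2 : 1 - s ^ 2 ≠ 0)
    (ht : 2 * t = s * (1 - s)) (hu : g ^ 2 = 1 - u * (1 - s ^ 2))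
    (hM : M * (2 * s * (1 + g) * (s + g)) = (1 + s) * ((1 + s) * g + 3 * s - 1))
    (hM1 : M1 * (4 * s ^ 2) = s ^ 2 + 4 * s - 1) :
    (u - 1) * M = (u - 1) + t * (u * (u - 1) * M ^ 2) + t * (u * (M - M1)) := by
  have ht' : t = s * (1 - s) / 2 := by linear_combination ht / 2
  have hu' : u = (1 - g ^ 2) / (1 - s ^ 2) := by
    rw [eq_div_iff hs2]; linear_combination hu
  have hM' : M = (1 + s) * ((1 + s) * g + 3 * s - 1) / (2 * s * (1 + g) * (s + g)) := by
    rw [eq_div_iff (by simp [hs, hg, hsg])]; exact hM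
  have hM1' : M1 = (s ^ 2 + 4 * s - 1) / (4 * s ^ 2) := by
    rw [eq_div_iff (by simp [hs])]; exact hM1
  rw [hM', hM1', ht', hu']
  field_simp
  ring

/-- The series `R = 1 + 2 t R^2`. -/
noncomputable def Rs : PowerSeries ℚ :=
  PowerSeries.rescale 2 (PowerSeries.map (Nat.castRingHom ℚ) PowerSeries.catalanSeries)

lemma Rs_coeff (n : ℕ) : PowerSeries.coeff n Rs = 2 ^ n * (catalan n : ℚ) := by
  simp [Rs, PowerSeries.coeff_rescale, PowerSeries.catalanSeries]

lemma Rs_eq : Rs = 1 + 2 * PowerSeries.X * Rs ^ 2 := by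
  have := congrArg (fun f => PowerSeries.rescale (2 : ℚ) (PowerSeries.map (Nat.castRingHom ℚ) f))
      PowerSeries.catalanSeries_sq_mul_X_add_one
  simp only [map_add, map_mul, map_pow, map_one, PowerSeries.map_X, PowerSeries.rescale_X] at this
  have h2 : (PowerSeries.C (2 : ℚ)) = 2 := map_ofNat _ _
  rw [h2] at this
  change Rs ^ 2 * (2 * PowerSeries.X) + 1 = Rs at this
  linear_combination -this

/-- The candidate `M(1) = 1 + r/2 - r^2/4`, `r = R - 1`. -/
noncomputable def Ms : PowerSeries ℚ :=
  1 + PowerSeries.C (1 / 2) * (Rs - 1) - PowerSeries.C (1 / 4) * (Rs - 1) ^ 2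

lemma Ms_eq : 4 * Ms = 4 + 2 * (Rs - 1) - (Rs - 1) ^ 2 := by
  have h4 : (4 : PowerSeries ℚ) = PowerSeries.C 4 := (map_ofNat _ _).symm
  have h1 : (4 : PowerSeries ℚ) * PowerSeries.C (1 / 2) = 2 := by
    rw [h4, ← map_mul, ← map_ofNat PowerSeries.C 2]; norm_num
  have h2 : (4 : PowerSeries ℚ) * PowerSeries.C (1 / 4) = 1 := by
    rw [h4, ← map_mul]; norm_num
  unfold Ms
  linear_combination (Rs - 1) * h1 - (Rs - 1) ^ 2 * h2

lemma Ms_coeff (n : ℕ) (hn : 1 ≤ n) : PowerSeries.coeff n Ms =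
    2 ^ n * ((catalan n : ℚ) - catalan (n + 1) / 4) := by
  have h : PowerSeries.X * (8 * Ms) = PowerSeries.X * (10 + 8 * (Rs - 1)) - (Rs - 1) := by
    linear_combination 2 * PowerSeries.X * Ms_eq + Rs_eq
  have h' := congrArg (PowerSeries.coeff (n + 1)) h
  have e1 : (8 : PowerSeries ℚ) = PowerSeries.C 8 := (map_ofNat _ _).symm
  have e2 : (10 : PowerSeries ℚ) = PowerSeries.C 10 := (map_ofNat _ _).symm
  rw [e1, e2, map_sub, PowerSeries.coeff_succ_X_mul, PowerSeries.coeff_succ_X_mul, map_add,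
    PowerSeries.coeff_C_mul, PowerSeries.coeff_C_mul, map_sub, map_sub, Rs_coeff, Rs_coeff,
    PowerSeries.coeff_one, PowerSeries.coeff_one, PowerSeries.coeff_C] at h'
  rw [if_neg (by omega), if_neg (by omega), if_neg (by omega)] at h'
  rw [pow_succ] at h'
  linarith

open Polynomial in
lemma exists_sol : ∃ N : PowerSeries ℚ[X], PowerSeries.constantCoeff N = 1 ∧
    (PowerSeries.C (X - 1)) * N = PowerSeries.C (X - 1) +
      PowerSeries.X * (PowerSeries.C (X * (X - 1)) * N ^ 2) +
      PowerSeries.X * (PowerSeries.C X * (N - PowerSeries.map C Ms)) := by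
  let φ : PowerSeries ℚ →+* PowerSeries ℚ[X] := PowerSeries.map C
  let R := φ Rs
  let t : PowerSeries ℚ[X] := PowerSeries.X
  let u : PowerSeries ℚ[X] := PowerSeries.C X
  have hφ2 : φ 2 = 2 := map_ofNat φ 2
  have hφ4 : φ 4 = 4 := map_ofNat φ 4
  have hR : R = 1 + 2 * t * R ^ 2 := by
    have := congrArg φ Rs_eq
    rw [map_add, map_mul, map_mul, map_pow, map_one, hφ2] at this
    simpa [φ] using this
  have hMs : 4 * φ Ms = 4 + 2 * (R - 1) - (R - 1) ^ 2 := by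
    have := congrArg φ Ms_eq
    rwa [map_mul, map_sub, map_add, map_mul, map_pow, map_sub, map_one, hφ2, hφ4] at this
  obtain ⟨s, hs⟩ : ∃ s, s = 1 - 2 * t * R := ⟨_, rfl⟩
  have hsR : s * R = 1 := by rw [hs]; linear_combination hR
  have ht : 2 * t = s * (1 - s) := by
    rw [hs]; linear_combination (-2 * t) * hR
  have hcs : PowerSeries.constantCoeff s = 1 := by rw [hs]; simp [t]
  let q : PowerSeries ℚ[X] := PowerSeries.C (C (1 / 4))
  have hq : 4 * q = 1 := by
    have h4 : (4 : PowerSeries ℚ[X]) = PowerSeries.C (C 4) := by rw [map_ofNat, map_ofNat]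
    rw [h4]; simp only [q]; rw [← map_mul, ← map_mul]; norm_num
  obtain ⟨Y, hY⟩ := exists_cat (q * u * (1 - s ^ 2)) (by simp [hcs])
  obtain ⟨g, hg⟩ : ∃ g, g = 1 - 2 * (q * u * (1 - s ^ 2)) * Y := ⟨_, rfl⟩
  have hg2 : g ^ 2 = 1 - u * (1 - s ^ 2) := by
    rw [hg]
    linear_combination -(4 * (q * u * (1 - s ^ 2))) * hY - u * (1 - s ^ 2) * hq
  have hcg : PowerSeries.constantCoeff g = 1 := by rw [hg]; simp [hcs]
  have hD : IsUnit (2 * s * (1 + g) * (s + g)) := by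
    rw [PowerSeries.isUnit_iff_constantCoeff]
    have : PowerSeries.constantCoeff (2 * s * (1 + g) * (s + g)) = C (8 : ℚ) := by
      simp only [map_mul, map_add, hcs, hcg, map_one, map_ofNat]; norm_num
    rw [this]
    exact Polynomial.isUnit_C.2 (by norm_num)
  obtain ⟨D', hD'⟩ := hD.exists_left_inv
  obtain ⟨N, hN⟩ : ∃ N, N = D' * ((1 + s) * ((1 + s) * g + 3 * s - 1)) := ⟨_, rfl⟩
  have hND : N * (2 * s * (1 + g) * (s + g)) = (1 + s) * ((1 + s) * g + 3 * s - 1) := by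
    rw [hN]; linear_combination ((1 + s) * ((1 + s) * g + 3 * s - 1)) * hD'
  have hM1 : φ Ms * (4 * s ^ 2) = s ^ 2 + 4 * s - 1 := by
    linear_combination s ^ 2 * hMs + (4 * s - (s * R) - 1) * hsR
  refine ⟨N, ?_, ?_⟩
  · have := congrArg PowerSeries.constantCoeff hND
    simp only [map_mul, map_add, map_sub, hcs, hcg, map_one, map_ofNat] at this
    have h8 : (8 : ℚ[X]) ≠ 0 := by norm_num
    apply mul_right_cancel₀ h8
    linear_combination this
  · have ne_of_cc : ∀ f : PowerSeries ℚ[X], PowerSeries.constantCoeff f ≠ 0 → f ≠ 0 := by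
      rintro f hf rfl; simp at hf
    have hs0 : s ≠ 0 := ne_of_cc _ (by rw [hcs]; exact one_ne_zero)
    have hg0 : 1 + g ≠ 0 := ne_of_cc _ (by rw [map_add, hcg, map_one]; norm_num)
    have hsg0 : s + g ≠ 0 := ne_of_cc _ (by rw [map_add, hcg, hcs]; norm_num)
    have hs20 : 1 - s ^ 2 ≠ 0 := by
      have h1 : 1 + s ≠ 0 := ne_of_cc _ (by rw [map_add, hcs, map_one]; norm_num)
      have h2 : 1 - s ≠ 0 := by
        intro h
        rw [h, mul_zero] at ht
        rcases mul_eq_zero.1 ht with h | h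
        · exact ne_of_cc 2 (by rw [map_ofNat]; norm_num) h
        · exact PowerSeries.X_ne_zero h
      have : 1 - s ^ 2 = (1 + s) * (1 - s) := by ring
      rw [this]
      exact mul_ne_zero h1 h2
    let K := FractionRing (PowerSeries ℚ[X])
    let ι : PowerSeries ℚ[X] →+* K := algebraMap _ _
    have hι : Function.Injective ι := IsFractionRing.injective _ _
    have hι0 : ∀ x, x ≠ 0 → ι x ≠ 0 := fun x hx h => hx (hι (by rw [h, map_zero]))
    have : CharZero K := by
      refine charZero_of_injective_ringHom (f := ι.comp ((PowerSeries.C).comp (C : ℚ →+* ℚ[X]))) ?_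
      exact RingHom.injective _
    have main := field_id (ι u) (ι t) (ι s) (ι g) (ι N) (ι (φ Ms)) (hι0 _ hs0)
      (by simpa using hι0 _ hg0) (by simpa using hι0 _ hsg0) (by simpa using hι0 _ hs20)
      (by simpa only [map_mul, map_add, map_sub, map_pow, map_one, map_ofNat] using congrArg ι ht) (by simpa using congrArg ι hg2)
      (by simpa only [map_mul, map_add, map_sub, map_pow, map_one, map_ofNat] using congrArg ι hND) (by simpa only [map_mul, map_add, map_sub, map_pow, map_one, map_ofNat] using congrArg ι hM1)
    have e1 : PowerSeries.C (X - 1 : ℚ[X]) = u - 1 := by simp [u]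
    have e2 : PowerSeries.C (X * (X - 1) : ℚ[X]) = u * (u - 1) := by simp [u]
    rw [e1, e2]
    apply hι
    simpa [u, t, φ] using main

open Polynomial in
lemma card_eq (n : ℕ) : PowerSeries.coeff n Ms = ((MS n).ncard : ℚ) := by
  obtain ⟨N, h0, h⟩ := exists_sol
  rw [← P_eval_one]
  refine uniq (fun n => PowerSeries.coeff n N) (fun n => PowerSeries.coeff n Ms) (by simpa using h0)
    ?_ n
  intro n
  have := congrArg (PowerSeries.coeff (n + 1)) h
  rw [map_add, map_add, PowerSeries.coeff_C_mul, PowerSeries.coeff_succ_X_mul,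
    PowerSeries.coeff_succ_X_mul, PowerSeries.coeff_C_mul, PowerSeries.coeff_C_mul, map_sub (PowerSeries.coeff n),
    PowerSeries.coeff_map, PowerSeries.coeff_C, if_neg (by omega), zero_add, pow_two,
    PowerSeries.coeff_mul] at this
  exact this

end BT

theorem count_modern_intervals (n : ℕ) (hn : 1 ≤ n) :
    (n + 1) * (n + 2) * Set.ncard {p : BT × BT | BT.interval p n ∧ BT.modern p} =
      3 * 2 ^ (n - 1) * Nat.choose (2 * n) n := by
  have h := BT.card_eq n
  rw [BT.Ms_coeff n hn] at h
  change (n + 1) * (n + 2) * (BT.MS n).ncard = _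
  have c1 : ((n : ℚ) + 1) * catalan n = Nat.choose (2 * n) n := by
    have := succ_mul_catalan_eq_centralBinom n
    rw [Nat.centralBinom] at this
    exact_mod_cast this
  have c2 : ((n : ℚ) + 2) * catalan (n + 1) = 2 * (2 * n + 1) * catalan n := by
    have a := succ_mul_catalan_eq_centralBinom n
    have b := succ_mul_catalan_eq_centralBinom (n + 1)
    have c := Nat.succ_mul_centralBinom_succ n
    have a' : ((n : ℚ) + 1) * catalan n = n.centralBinom := by exact_mod_cast a
    have b' : ((n : ℚ) + 1 + 1) * catalan (n + 1) = (n + 1).centralBinom := by exact_mod_cast b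
    have c' : ((n : ℚ) + 1) * (n + 1).centralBinom = 2 * (2 * n + 1) * n.centralBinom := by
      exact_mod_cast c
    have hn' : (n : ℚ) + 1 ≠ 0 := by positivity
    apply mul_left_cancel₀ hn'
    linear_combination (n + 1 : ℚ) * b' + c' - 2 * (2 * n + 1) * a'
  obtain ⟨m, rfl⟩ : ∃ m, n = m + 1 := ⟨n - 1, by omega⟩
  rw [Nat.add_sub_cancel]
  have : (((m + 1 + 1) * (m + 1 + 2) * (BT.MS (m + 1)).ncard : ℕ) : ℚ) =
      ((3 * 2 ^ m * Nat.choose (2 * (m + 1)) (m + 1) : ℕ) : ℚ) := by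
    push_cast at c1 c2 h ⊢
    rw [← h, ← c1, pow_succ]
    linear_combination (-(2 ^ m * 2 * (m + 1 + 1) / 4) : ℚ) * c2
  exact_mod_cast this
end

section
/- For i, j ≥ 1, the number of modern-synchronized Tamari intervals with i canopy entries equal to 1 and j canopy entries equal to 0 equals the Narayana number (1/(i+j-1)) · C(i+j-1, i) · C(i+j-1, j). -/
namespace BT

/-- Path-like tree of a word. -/
def tr : List Bool → BT
  | [] => node leaf leaf
  | true :: w => node leaf (tr w)
  | false :: w => node (tr w) leaf

/-- number of `true` letters -/
def ct : List Bool → ℕ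
  | [] => 0
  | x :: w => ct w + (if x then 1 else 0)

/-- suffix dominance of words of equal lengths -/
def Dm : List Bool → List Bool → Prop
  | [], [] => True
  | x :: w, y :: v => Dm w v ∧ ct (y :: v) ≤ ct (x :: w)
  | _, _ => False

theorem Dm.ct_le {w v : List Bool} (h : Dm w v) : ct v ≤ ct w := by
  cases w <;> cases v <;> simp_all [Dm, ct]

theorem Dm.length_eq : ∀ {w v : List Bool}, Dm w v → w.length = v.length
  | [], [], _ => rfl
  | _ :: _, _ :: _, h => by simp [Dm.length_eq h.1]
  | [], _ :: _, h => by simp [Dm] at h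
  | _ :: _, [], h => by simp [Dm] at h

theorem ct_le_length : ∀ w : List Bool, ct w ≤ w.length
  | [] => by simp [ct]
  | x :: w => by
    have := ct_le_length w
    simp only [ct, List.length_cons]
    split <;> omega

theorem tle_left_s10 {l l' : BT} (r : BT) (h : tle l l') : tle (node l r) (node l' r) :=
  Relation.ReflTransGen.lift (fun t => node t r) (fun _ _ h => Rot.left r h) _ _ h

theorem tle_right_s10 (l : BT) {r r' : BT} (h : tle r r') : tle (node l r) (node l r') :=
  Relation.ReflTransGen.lift (fun t => node l t) (fun _ _ h => Rot.right l h) _ _ h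

theorem tle_rot_s10 (A B C : BT) : tle (node (node A B) C) (node A (node B C)) :=
  Relation.ReflTransGen.single (Rot.rotate A B C)

theorem tle.tr' {a b c : BT} (h : tle a b) (h' : tle b c) : tle a c :=
  Relation.ReflTransGen.trans h h'

theorem tr_push : ∀ u : List Bool, 1 ≤ ct u → ∃ v : List Bool,
    tle (tr (false :: u)) (tr (true :: v)) ∧ ct v + 1 = ct u ∧
    ∀ u', Dm u u' → ct u' + 1 ≤ ct u → Dm v u'
  | [], h => by simp [ct] at h
  | true :: v, _ => by
    refine ⟨false :: v, tle_rot_s10 _ _ _, by simp [ct], ?_⟩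
    rintro (_ | ⟨y, v'⟩) hD hc
    · simp [Dm] at hD
    · simp only [Dm] at hD ⊢
      refine ⟨hD.1, ?_⟩
      simp only [ct] at hc ⊢
      simp at hc ⊢
      exact hc
  | false :: v, h => by
    obtain ⟨v2, h1, h2, h3⟩ := tr_push v (by simpa [ct] using h)
    refine ⟨false :: v2, ?_, by simpa [ct] using h2, ?_⟩
    · exact (tle_left_s10 leaf h1).tr' (tle_rot_s10 _ _ _)
    · rintro (_ | ⟨y, v'⟩) hD hc
      · simp [Dm] at hD
      · simp only [Dm] at hD ⊢
        simp only [ct] at hc ⊢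
        simp at hc ⊢
        exact ⟨h3 _ hD.1 (by omega), by omega⟩

theorem tle_of_Dm : ∀ w v : List Bool, Dm w v → ct w = ct v → tle (tr w) (tr v)
  | [], [], _, _ => Relation.ReflTransGen.refl
  | [], _ :: _, h, _ => by simp [Dm] at h
  | _ :: _, [], h, _ => by simp [Dm] at h
  | true :: w, true :: v, h, hc => tle_right_s10 _ (tle_of_Dm w v h.1 (by simpa [ct] using hc))
  | false :: w, false :: v, h, hc => tle_left_s10 _ (tle_of_Dm w v h.1 (by simpa [ct] using hc))
  | true :: w, false :: v, h, hc => by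
    have := h.1.ct_le
    simp [ct] at hc
    omega
  | false :: w, true :: v, h, hc => by
    simp [ct] at hc
    obtain ⟨u, h1, h2, h3⟩ := tr_push w (by omega)
    exact h1.tr' (tle_right_s10 _ (tle_of_Dm u v (h3 v h.1 (by omega)) (by omega)))
  termination_by _ v => v.length

theorem tr_rise : ∀ w : List Bool, tle (node (tr w) leaf) (node leaf (tr w))
  | [] => tle_rot_s10 _ _ _
  | true :: w => (tle_rot_s10 _ _ _).tr' (tle_right_s10 _ (tr_rise w))
  | false :: w => (tle_left_s10 _ (tr_rise w)).tr' (tle_rot_s10 _ _ _)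

theorem size_tr : ∀ w : List Bool, (tr w).size = w.length + 1
  | [] => by simp [tr, size]
  | true :: w => by simp [tr, size, size_tr w]
  | false :: w => by simp [tr, size, size_tr w]

/-- canopies of path trees -/
theorem canopyAux_tr (b : ℕ) : ∀ w : List Bool, canopyAux b (tr w) =
    List.replicate (ct w + 1) 1 ++ List.replicate (w.length - ct w + 1) 0 := by
  intro w
  induction w generalizing b with
  | nil => simp [tr, canopyAux, ct]
  | cons x w ih =>
    have := ct_le_length w
    cases x
    · have e : w.length + 1 - ct w = w.length - ct w + 1 := by omega
      simp [tr, canopyAux, ct, ih, List.replicate_succ', e]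
    · simp [tr, canopyAux, ct, ih, List.replicate_succ]

theorem size_rot {T U : BT} (h : Rot T U) : T.size = U.size := by
  induction h with
  | rotate A B C => simp [size]; omega
  | left r _ ih => simp [size, ih]
  | right l _ ih => simp [size, ih]

theorem forall₂_refl (l : List ℕ) : List.Forall₂ (· ≤ ·) l l :=
  List.forall₂_same.2 fun _ _ => le_rfl

theorem bracket_rot {T U : BT} (h : Rot T U) :
    List.Forall₂ (· ≤ ·) (bracket T) (bracket U) := by
  induction h with
  | rotate A B C =>
    simp only [bracket, size, List.append_assoc, List.cons_append]
    exact List.rel_append (forall₂_refl _)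
      (List.Forall₂.cons (by omega) (forall₂_refl _))
  | left r _ ih =>
    exact List.rel_append ih (forall₂_refl _)
  | right l h ih =>
    exact List.rel_append (forall₂_refl _) (List.Forall₂.cons (size_rot h).le ih)

theorem forall₂_trans {a b c : List ℕ} (h : List.Forall₂ (· ≤ ·) a b)
    (h' : List.Forall₂ (· ≤ ·) b c) : List.Forall₂ (· ≤ ·) a c := by
  induction h generalizing c with
  | nil => exact h'
  | cons hab _ ih =>
    cases h' with
    | cons h1 h2 => exact List.Forall₂.cons (hab.trans h1) (ih h2)

theorem bracket_tle {T U : BT} (h : tle T U) :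
    List.Forall₂ (· ≤ ·) (bracket T) (bracket U) := by
  induction h with
  | refl => exact forall₂_refl _
  | tail _ h ih => exact forall₂_trans ih (bracket_rot h)

/-- sign -/
def sg (n : ℕ) : ℕ := if n = 0 then 0 else 1

theorem canopyAux_bracket (T : BT) :
    canopyAux 1 T = 1 :: (bracket T).map sg ∧
    canopyAux 0 T = sg T.size :: (bracket T).map sg := by
  induction T with
  | leaf => simp [canopyAux, bracket, sg, size]
  | node l r ihl ihr => simp [canopyAux, bracket, ihl.1, ihr.2, sg, size]

theorem chain_of : ∀ (b b' : List ℕ) (c : ℕ), b.map sg = b'.map sg →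
    List.Forall₂ (· ≤ ·) (b ++ [0]) (c :: b') → (sg c :: b.map sg).Pairwise (· ≥ ·)
  | [], _, _, _, _ => by simp
  | x :: b, [], _, h, _ => by simp at h
  | x :: b, y :: b', c, h, h2 => by
    simp only [List.map_cons, List.cons.injEq] at h
    simp only [List.cons_append, List.forall₂_cons] at h2
    have ih := chain_of b b' y h.2 h2.2
    rw [← h.1] at ih
    rw [List.map_cons, List.pairwise_cons]
    refine ⟨?_, ih⟩
    have hx : sg x ≤ sg c := by
      have := h2.1
      unfold sg; split <;> split <;> omega
    intro z hz
    rcases List.mem_cons.1 hz with rfl | hz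
    · exact hx
    · exact (List.rel_of_pairwise_cons ih hz).trans hx

theorem zero_mem (b : ℕ) (l r : BT) : 0 ∈ canopyAux b (node l r) := by
  induction r generalizing b l with
  | leaf => simp [canopyAux]
  | node l' r' _ ih => 
    rw [canopyAux]; exact List.mem_append_right _ (ih 0 l')

theorem one_mem (b : ℕ) (l r : BT) : 1 ∈ canopyAux b (node l r) := by
  induction l generalizing b r with
  | leaf => simp [canopyAux]
  | node l' r' ih _ => 
    rw [canopyAux]; exact List.mem_append_left _ (ih 1 r')

theorem exists_tr (T : BT) : ∀ b, (canopyAux b T).Pairwise (· ≥ ·) → T ≠ leaf →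
    ∃ w, T = tr w := by
  induction T with
  | leaf => intro b _ h; exact absurd rfl h
  | node l r ihl ihr =>
    intro b h _
    rw [canopyAux, List.pairwise_append] at h
    obtain ⟨h1, h2, h3⟩ := h
    cases l with
    | leaf =>
      cases r with
      | leaf => exact ⟨[], rfl⟩
      | node r1 r2 =>
        obtain ⟨w, hw⟩ := ihr 0 h2 (by simp)
        exact ⟨true :: w, by rw [hw]; rfl⟩
    | node l1 l2 =>
      cases r with
      | leaf =>
        obtain ⟨w, hw⟩ := ihl 1 h1 (by simp)
        exact ⟨false :: w, by rw [hw]; rfl⟩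
      | node r1 r2 =>
        have := h3 0 (zero_mem _ _ _) 1 (one_mem _ _ _)
        omega

/-- number of bracket entries between 1 and m -/
def G (m : ℕ) (l : List ℕ) : ℕ := l.countP (fun b => 1 ≤ b ∧ b ≤ m)

theorem G_true (m : ℕ) (w : List Bool) : G m (bracket (tr (true :: w))) =
    G m (bracket (tr w)) + if w.length + 1 ≤ m then 1 else 0 := by
  simp [G, tr, bracket, List.countP_cons, size_tr]

theorem G_false (m : ℕ) (w : List Bool) : G m (bracket (tr (false :: w))) =
    G m (bracket (tr w)) := by
  simp [G, tr, bracket, size]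

theorem G_full (m : ℕ) : ∀ w : List Bool, w.length ≤ m → G m (bracket (tr w)) = ct w
  | [], _ => by simp [G, tr, bracket, size, ct]
  | true :: w, h => by
    simp only [List.length_cons] at h
    rw [G_true, G_full m w (by omega)]; simp [ct, h]
  | false :: w, h => by
    simp only [List.length_cons] at h
    rw [G_false, G_full m w (by omega)]; simp [ct]

theorem G_small (m : ℕ) (x : Bool) (w : List Bool) (h : m ≤ w.length) :
    G m (bracket (tr (x :: w))) = G m (bracket (tr w)) := by
  cases x
  · exact G_false m w
  · rw [G_true, if_neg (by omega)]; rfl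

theorem G_len (x : Bool) (w : List Bool) (m : ℕ) (h : w.length ≤ m) :
    G m (bracket (tr w)) = G w.length (bracket (tr w)) := by
  rw [G_full _ _ h, G_full _ _ le_rfl]

theorem Dm_of_G : ∀ w v : List Bool, w.length = v.length →
    (∀ m, G m (bracket (tr v)) ≤ G m (bracket (tr w))) → Dm w v
  | [], [], _, _ => trivial
  | [], _ :: _, h, _ => by simp at h
  | _ :: _, [], h, _ => by simp at h
  | x :: w, y :: v, h, hG => by
    have hl : w.length = v.length := by simpa using h
    refine ⟨Dm_of_G w v hl ?_, ?_⟩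
    · intro m
      rcases le_total m w.length with hm | hm
      · have := hG m
        rwa [G_small _ _ _ hm, G_small _ _ _ (hl ▸ hm)] at this
      · have := hG w.length
        rw [G_small _ _ _ le_rfl, G_small _ _ _ hl.le] at this
        rw [G_len x w m hm, G_len x v m (hl ▸ hm), ← hl]
        exact this
    · have := hG (w.length + 1)
      rwa [G_full _ (x :: w) (by simp), G_full _ (y :: v) (by simp [hl])] at this

theorem G_mono (m : ℕ) {b b' : List ℕ} (h : List.Forall₂ (· ≤ ·) b b')
    (hs : b.map sg = b'.map sg) : G m b' ≤ G m b := by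
  induction h with
  | nil => exact le_rfl
  | @cons x y l l' hab _ ih =>
    simp only [List.map_cons, List.cons.injEq] at hs
    have := ih hs.2
    have hxy := hs.1
    simp only [G, List.countP_cons, decide_eq_true_eq] at this ⊢
    unfold sg at hxy
    split_ifs at hxy ⊢ <;> omega

theorem tr_inj : ∀ w v : List Bool, tr w = tr v → w = v
  | [], [], _ => rfl
  | [], y :: v, h => by
    have := congrArg size h
    simp [size_tr] at this
  | y :: v, [], h => by
    have := congrArg size h
    simp [size_tr] at this
  | true :: w, true :: v, h => by
    rw [tr_inj w v (by simpa [tr] using h)]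
  | false :: w, false :: v, h => by
    rw [tr_inj w v (by simpa [tr] using h)]
  | true :: w, false :: v, h => by
    simp only [tr, node.injEq] at h
    have := congrArg size h.1
    simp [size_tr, size] at this
  | false :: w, true :: v, h => by
    simp only [tr, node.injEq] at h
    have := congrArg size h.1
    simp [size_tr, size] at this

/-- dominated pairs of words with prescribed length and counts -/
def S (m : ℕ) (a a' : ℤ) : Set (List Bool × List Bool) :=
  {q | Dm q.1 q.2 ∧ q.1.length = m ∧ (ct q.1 : ℤ) = a ∧ (ct q.2 : ℤ) = a'}

theorem set_eq (p q : ℕ) : {t : BT × BT | BT.isInt t ∧ BT.modern t ∧ BT.synced t ∧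
        (BT.canopy t.1).count 1 = p + 1 ∧ (BT.canopy t.1).count 0 = q + 1} =
    (fun x : List Bool × List Bool => (tr x.1, tr x.2)) '' S (p + q) p p := by
  ext ⟨T, U⟩
  simp only [Set.mem_setOf_eq, Set.mem_image, S, Prod.mk.injEq, Prod.exists]
  constructor
  · rintro ⟨⟨hs, hI⟩, hM, hS, h1, h0⟩
    have hS' : canopy T = canopy U := hS
    have hb : (bracket T).map sg = (bracket U).map sg := by
      have := hS'
      rw [canopy, canopy, (canopyAux_bracket T).1, (canopyAux_bracket U).1] at this
      simpa using this
    have hM' := bracket_tle hM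
    simp only [bracket, size, List.nil_append] at hM'
    have hT : T ≠ leaf := by
      rintro rfl
      simp [canopy, canopyAux] at h0
    have hT0 : T.size ≠ 0 := by
      cases T with
      | leaf => exact absurd rfl hT
      | node l r => simp [size]
    have hU : U ≠ leaf := by
      rintro rfl
      exact hT0 hs
    have hU0 : U.size ≠ 0 := hs ▸ hT0
    have hP := chain_of _ _ _ hb hM'
    have e : sg U.size = 1 := by simp [sg, hU0]
    rw [e, ← (canopyAux_bracket T).1] at hP
    have hP2 : (canopyAux 1 U).Pairwise (· ≥ ·) := by
      have : canopyAux 1 T = canopyAux 1 U := hS'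
      rwa [this] at hP
    obtain ⟨w, rfl⟩ := exists_tr T 1 hP hT
    obtain ⟨v, rfl⟩ := exists_tr U 1 hP2 hU
    have hl : w.length = v.length := by simpa [size_tr] using hs
    have hD := Dm_of_G w v hl (fun m => G_mono m (bracket_tle hI) hb)
    have h1' : (canopy (tr v)).count 1 = p + 1 := hS' ▸ h1
    have := ct_le_length w
    simp [canopy, canopyAux_tr, List.count_replicate] at h1 h0 h1'
    refine ⟨w, v, ⟨hD, by omega, by exact_mod_cast h1, by exact_mod_cast h1'⟩, rfl, rfl⟩
  · rintro ⟨w, v, ⟨hD, hl, hw, hv⟩, rfl, rfl⟩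
    have hw : ct w = p := by exact_mod_cast hw
    have hv : ct v = p := by exact_mod_cast hv
    have hlv := hD.length_eq
    have ht := tle_of_Dm w v hD (hw.trans hv.symm)
    refine ⟨⟨by simp [size_tr, hlv], ht⟩, (tle_left_s10 _ ht).tr' (tr_rise v), ?_, ?_, ?_⟩
    · simp [synced, canopy, canopyAux_tr, hw, hv, hlv]
    · simp [canopy, canopyAux_tr, List.count_replicate, hw]
    · simp [canopy, canopyAux_tr, List.count_replicate, hw, hl]

theorem S_finite (m : ℕ) (a a' : ℤ) : (S m a a').Finite := by
  have h : {l : List Bool | l.length = m}.Finite := List.finite_length_eq Bool m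
  refine (h.prod h).subset ?_
  rintro ⟨w, v⟩ ⟨h1, h2, -⟩
  exact ⟨h2, h1.length_eq.symm.trans h2⟩

instance instFiniteS (m : ℕ) (a b : ℤ) : Finite (S m a b) := S_finite m a b

/-- binomial with integer lower argument -/
def ch (m : ℕ) (a : ℤ) : ℤ := if 0 ≤ a then (m.choose a.toNat : ℤ) else 0

theorem ch_nat (m k : ℕ) : ch m k = m.choose k := by simp [ch]

theorem ch_succ (m : ℕ) (a : ℤ) : ch (m + 1) a = ch m a + ch m (a - 1) := by
  rcases lt_or_ge a 0 with h | h
  · simp [ch, not_le.2 h, show ¬ (1 ≤ a) by omega]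
  · lift a to ℕ using h
    cases a with
    | zero => simp [ch]
    | succ k =>
      have : ((k + 1 : ℕ) : ℤ) - 1 = (k : ℕ) := by push_cast; ring
      rw [this, ch_nat, ch_nat, ch_nat, Nat.choose_succ_succ]
      push_cast; ring

theorem ch_zero (a : ℤ) : ch 0 a = if a = 0 then 1 else 0 := by
  rcases lt_or_ge a 0 with h | h
  · simp [ch, not_le.2 h, h.ne]
  · lift a to ℕ using h
    cases a with
    | zero => simp [ch]
    | succ k => rw [ch_nat]; simp; omega

/-- prepend letters -/
def cns (x y : Bool) (q : List Bool × List Bool) : List Bool × List Bool :=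
  (x :: q.1, y :: q.2)

theorem cns_inj (x y : Bool) : Function.Injective (cns x y) := by
  rintro ⟨a, b⟩ ⟨c, d⟩ h
  simpa [cns] using h

theorem S_succ (m : ℕ) (a a' : ℤ) (h : a' ≤ a) : S (m + 1) a a' =
    (cns false false '' S m a a' ∪ cns true false '' S m (a - 1) a') ∪
    (cns false true '' S m a (a' - 1) ∪ cns true true '' S m (a - 1) (a' - 1)) := by
  ext ⟨w, v⟩
  simp only [Set.mem_union, Set.mem_image, Prod.exists, cns, Prod.mk.injEq, S, Set.mem_setOf_eq]
  constructor
  · rintro ⟨hD, hl, hw, hv⟩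
    rcases w with _ | ⟨x, w⟩
    · simp at hl
    rcases v with _ | ⟨y, v⟩
    · simp [Dm] at hD
    have hD1 := hD.1
    simp only [ct, List.length_cons] at hl hw hv
    cases x <;> cases y <;> simp at hl hw hv ⊢
    · exact ⟨hD1, hl, hw, hv⟩
    · exact ⟨hD1, hl, hw, by omega⟩
    · exact ⟨hD1, hl, by omega, hv⟩
    · exact ⟨hD1, hl, by omega, by omega⟩
  · rintro ((⟨w, v, ⟨hD, hl, hw, hv⟩, rfl, rfl⟩ | ⟨w, v, ⟨hD, hl, hw, hv⟩, rfl, rfl⟩) |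
      (⟨w, v, ⟨hD, hl, hw, hv⟩, rfl, rfl⟩ | ⟨w, v, ⟨hD, hl, hw, hv⟩, rfl, rfl⟩)) <;>
    · simp [Dm, ct, hD, hl]
      omega

theorem S_card (m : ℕ) : ∀ a a' : ℤ, a' ≤ a + 1 →
    ((S m a a').ncard : ℤ) = ch m a * ch m a' - ch m (a + 1) * ch m (a' - 1) := by
  induction m with
  | zero =>
    intro a a' h
    simp only [ch_zero]
    by_cases h0 : a = 0 ∧ a' = 0
    · obtain ⟨rfl, rfl⟩ := h0
      have : S 0 0 0 = {([], [])} := by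
        ext ⟨w, v⟩
        simp only [S, Set.mem_setOf_eq, Set.mem_singleton_iff, Prod.mk.injEq]
        constructor
        · rintro ⟨hD, hl, -⟩
          have := hD.length_eq
          exact ⟨List.length_eq_zero_iff.1 hl, List.length_eq_zero_iff.1 (this ▸ hl)⟩
        · rintro ⟨rfl, rfl⟩
          simp [Dm, ct]
      rw [this]; simp
    · have : S 0 a a' = ∅ := by
        ext ⟨w, v⟩
        simp only [S, Set.mem_setOf_eq, Set.mem_empty_iff_false, iff_false]
        rintro ⟨hD, hl, hw, hv⟩
        have h2 := hD.length_eq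
        obtain rfl := List.length_eq_zero_iff.1 hl
        obtain rfl := List.length_eq_zero_iff.1 (h2 ▸ hl)
        simp [ct] at hw hv
        omega
      rw [this]
      simp only [Set.ncard_empty]
      split_ifs <;> first | omega | simp
  | succ m ih =>
    intro a a' h
    rcases eq_or_lt_of_le h with h | h
    · have : S (m + 1) a a' = ∅ := by
        ext ⟨w, v⟩
        simp only [S, Set.mem_setOf_eq, Set.mem_empty_iff_false, iff_false]
        rintro ⟨hD, hl, hw, hv⟩
        have := hD.ct_le
        omega
      rw [this, h]
      simp
      ring
    · rw [S_succ m a a' (by omega), Set.ncard_union_eq, Set.ncard_union_eq, Set.ncard_union_eq,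
        Set.ncard_image_of_injective _ (cns_inj _ _), Set.ncard_image_of_injective _ (cns_inj _ _),
        Set.ncard_image_of_injective _ (cns_inj _ _), Set.ncard_image_of_injective _ (cns_inj _ _)]
      · push_cast
        rw [ih _ _ (by omega), ih _ _ (by omega), ih _ _ (by omega), ih _ _ (by omega)]
        simp only [ch_succ]
        rw [show a - 1 + 1 = a by ring, show a + 1 - 1 = a by ring]
        ring
      all_goals first
        | exact (S_finite _ _ _).image _
        | exact ((S_finite _ _ _).image _).union ((S_finite _ _ _).image _)
        | (rw [Set.disjoint_left]
           rintro ⟨w, v⟩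
           simp only [Set.mem_union, Set.mem_image, Prod.exists, cns, Prod.mk.injEq]
           grind)

theorem narayana (p q : ℕ) : ((p : ℤ) + q + 1) *
    (ch (p + q) p * ch (p + q) p - ch (p + q) (p + 1) * ch (p + q) (p - 1)) =
    ((p + q + 1).choose (p + 1) : ℤ) * ((p + q + 1).choose (q + 1) : ℤ) := by
  have e1 : ((p + q + 1).choose (p + 1) : ℤ) = ch (p + q) (p + 1) + ch (p + q) p := by
    have := ch_succ (p + q) (p + 1)
    rw [show ((p : ℤ) + 1 - 1) = p by ring] at this
    rw [← this, ← ch_nat]; push_cast; rfl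
  have e2 : ((p + q + 1).choose (q + 1) : ℤ) = ch (p + q) p + ch (p + q) (p - 1) := by
    rw [← ch_succ, ch_nat]
    congr 1
    rw [← Nat.choose_symm_of_eq_add]; omega
  have hA : ((p : ℤ) + 1) * ch (p + q) (p + 1) = q * ch (p + q) p := by
    have := Nat.choose_succ_right_eq (p + q) p
    rw [show p + q - p = q by omega] at this
    have h2 : ch (p + q) (p + 1) = ((p + q).choose (p + 1) : ℕ) := by
      rw [← ch_nat]; push_cast; rfl
    rw [h2, ch_nat]
    have h3 : (((p + q).choose (p + 1) * (p + 1) : ℕ) : ℤ) = ((p + q).choose p * q : ℕ) := by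
      rw [this]
    push_cast at h3
    linarith
  have hB : ((q : ℤ) + 1) * ch (p + q) (p - 1) = p * ch (p + q) p := by
    cases p with
    | zero => simp [ch]
    | succ k =>
      have := Nat.choose_succ_right_eq (k + 1 + q) k
      rw [show k + 1 + q - k = q + 1 by omega] at this
      rw [show (((k + 1 : ℕ) : ℤ) - 1) = (k : ℕ) by push_cast; ring, ch_nat, ch_nat]
      have h3 : (((k + 1 + q).choose (k + 1) * (k + 1) : ℕ) : ℤ)
          = ((k + 1 + q).choose k * (q + 1) : ℕ) := by
        rw [this]
      push_cast at h3 ⊢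
      linarith
  rw [e1, e2]
  generalize ch (p + q) p = x at *
  generalize ch (p + q) (p + 1) = A at *
  generalize ch (p + q) (p - 1) = B at *
  have hp : ((p : ℤ) + 1) * (q + 1) ≠ 0 := by positivity
  apply mul_left_cancel₀ hp
  have l1 : ((p : ℤ) + 1) * (q + 1) * (((p : ℤ) + q + 1) * (x * x - A * B)) =
      ((p : ℤ) + q + 1) * (((p : ℤ) + 1) * (q + 1) * x * x
        - (((p : ℤ) + 1) * A) * (((q : ℤ) + 1) * B)) := by ring
  have l2 : ((p : ℤ) + 1) * (q + 1) * ((A + x) * (x + B)) =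
      (((p : ℤ) + 1) * A + (p + 1) * x) * (((q : ℤ) + 1) * B + (q + 1) * x) := by ring
  rw [l1, l2, hA, hB]
  ring

end BT

theorem count_modern_synchronized_intervals_bivariate (i j : ℕ) (hi : 1 ≤ i) (hj : 1 ≤ j) :
    (i + j - 1) * Set.ncard {p : BT × BT | BT.isInt p ∧ BT.modern p ∧ BT.synced p ∧
        (BT.canopy p.1).count 1 = i ∧ (BT.canopy p.1).count 0 = j} =
      Nat.choose (i + j - 1) i * Nat.choose (i + j - 1) j := by
  obtain ⟨p, rfl⟩ := Nat.exists_eq_add_of_le' hi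
  obtain ⟨q, rfl⟩ := Nat.exists_eq_add_of_le' hj
  rw [BT.set_eq, Set.ncard_image_of_injective]
  · have h1 := BT.S_card (p + q) p p (by omega)
    have h2 := BT.narayana p q
    rw [← h1] at h2
    rw [show p + 1 + (q + 1) - 1 = p + q + 1 by omega]
    exact_mod_cast h2
  · rintro ⟨a, b⟩ ⟨c, d⟩ h
    simp only [Prod.mk.injEq] at h
    rw [BT.tr_inj _ _ h.1, BT.tr_inj _ _ h.2]
end
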